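/- arXiv:2307.01358 — 2 statements merged into one kernel-verified Lean document; each statement's English description precedes it below -/
import Mathlib

section
/- Shift operator of H₆ for the block shift sh₁ (Theorem on shift operators of H₆, first case): for all e ∈ ℂ⁹ and u ∈ ℂ, with α₁ := s₁₃ + s₂₃ + 1 (computed from e), the identity H₆(sh₁(e), u − α₁) ∘ ((x−1)·∂ + s) = ((x−1)·∂ + s + 3) ∘ H₆(e,u) holds in End_ℂ(ℂ[x]). -/
open Polynomial

noncomputable section

abbrev EndP := Module.End ℂ (Polynomial ℂ)

/-- The formal derivative `∂` as a linear endomorphism of `ℂ[x]`. -/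
def D : EndP := Polynomial.derivative

/-- Multiplication by the polynomial `p` as a linear endomorphism of `ℂ[x]`. -/
def M (p : Polynomial ℂ) : EndP := LinearMap.mulLeft ℂ p

/-- The Euler operator `θ = x·∂`. -/
def θop : EndP := M X * D

/-- `s = (6 − e₁ − ⋯ − e₉)/3`. -/
def sC (e1 e2 e3 e4 e5 e6 e7 e8 e9 : ℂ) : ℂ :=
  (6 - e1 - e2 - e3 - e4 - e5 - e6 - e7 - e8 - e9) / 3

def T12C (e1 e2 e3 _e4 _e5 _e6 e7 e8 e9 : ℂ) : ℂ :=
  (e1 + e2 + e3) - 2 * (e7 + e8 + e9) - 9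

def T11C (e1 e2 e3 e4 e5 e6 e7 e8 e9 : ℂ) : ℂ :=
  let s11 := e1 + e2 + e3;
  let s12 := e4 + e5 + e6;
  let s13 := e7 + e8 + e9;
  let s21 := e1*e2 + e1*e3 + e2*e3;
  let s22 := e4*e5 + e4*e6 + e5*e6;
  let s23 := e7*e8 + e7*e9 + e8*e9;
  -8 + (s11^2 + 2*s11*s13 - s12^2 + s13^2)/3 + s11 - 5*s13 - s21 + s22 - 2*s23

def T22C (e1 e2 e3 _e4 _e5 _e6 e7 e8 e9 : ℂ) : ℂ :=
  -2 * (e1 + e2 + e3) + (e7 + e8 + e9) + 18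

def T21C (e1 e2 e3 e4 e5 e6 e7 e8 e9 : ℂ) : ℂ :=
  let s11 := e1 + e2 + e3;
  let s12 := e4 + e5 + e6;
  let s13 := e7 + e8 + e9;
  let s21 := e1*e2 + e1*e3 + e2*e3;
  let s22 := e4*e5 + e4*e6 + e5*e6;
  let s23 := e7*e8 + e7*e9 + e8*e9;
  35 + (-s11^2 - 2*s11*s13 + s12^2 - s13^2)/3 - 7*s11 + 5*s13 + 2*s21 - s22 + s23

def T20C (e1 e2 e3 e4 e5 e6 e7 e8 e9 u : ℂ) : ℂ :=
  let s11 := e1 + e2 + e3;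
  let s12 := e4 + e5 + e6;
  let s13 := e7 + e8 + e9;
  let s21 := e1*e2 + e1*e3 + e2*e3;
  let s22 := e4*e5 + e4*e6 + e5*e6;
  let s31 := e1*e2*e3;
  let s32 := e4*e5*e6;
  let s33 := e7*e8*e9;
  -u + 19 + (s11^2*s13 - s11*s12^2 + s11*s13^2 - s12^2*s13)/9
    + (s13^3 + s11^3 - 2*s12^3)/27
    + (-2*s11^2 - 4*s11*s13 + s11*s22 + 2*s12^2 + s22*s12 - 2*s13^2 + s22*s13)/3
    - 5*s11 + 4*s13 + 3*s21 - 2*s22 - s31 - s32 - s33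

/-- `B₀(t) = (t+e₇)(t+e₈)(t+e₉)`. -/
def B0op (e7 e8 e9 : ℂ) (t : EndP) : EndP :=
  (t + e7 • 1) * (t + e8 • 1) * (t + e9 • 1)

/-- `B₁(t) = −3t³ + T₁₂t² + T₁₁t + u`. -/
def B1op (e1 e2 e3 e4 e5 e6 e7 e8 e9 u : ℂ) (t : EndP) : EndP :=
  (-3 : ℂ) • t ^ 3 + (T12C e1 e2 e3 e4 e5 e6 e7 e8 e9) • t ^ 2
    + (T11C e1 e2 e3 e4 e5 e6 e7 e8 e9) • t + u • 1

/-- `B₂(t) = 3t³ + T₂₂t² + T₂₁t + T₂₀`. -/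
def B2op (e1 e2 e3 e4 e5 e6 e7 e8 e9 u : ℂ) (t : EndP) : EndP :=
  (3 : ℂ) • t ^ 3 + (T22C e1 e2 e3 e4 e5 e6 e7 e8 e9) • t ^ 2
    + (T21C e1 e2 e3 e4 e5 e6 e7 e8 e9) • t + (T20C e1 e2 e3 e4 e5 e6 e7 e8 e9 u) • 1

/-- `T₃(t) = −(t+3−e₁)(t+3−e₂)(t+3−e₃)`. -/
def T3op (e1 e2 e3 : ℂ) (t : EndP) : EndP :=
  -((t + (3 - e1) • 1) * (t + (3 - e2) • 1) * (t + (3 - e3) • 1))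

/-- The operator `H₆(e,u)`. -/
def H6op (e1 e2 e3 e4 e5 e6 e7 e8 e9 u : ℂ) : EndP :=
  let s := sC e1 e2 e3 e4 e5 e6 e7 e8 e9;
  (θop + (s + 2) • 1) * (θop + (s + 1) • 1) * (θop + s • 1) * B0op e7 e8 e9 θop
    + (θop + (s + 2) • 1) * (θop + (s + 1) • 1) * B1op e1 e2 e3 e4 e5 e6 e7 e8 e9 u θop * D
    + (θop + (s + 2) • 1) * B2op e1 e2 e3 e4 e5 e6 e7 e8 e9 u θop * D ^ 2
    + T3op e1 e2 e3 θop * D ^ 3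

theorem D_mul_theta : D * θop = (θop + 1) * D := by
  refine LinearMap.ext fun p => ?_
  simp [D, θop, M, Module.End.mul_apply, add_comm]

theorem M_sub : M (X - 1) * D = θop - D := by
  refine LinearMap.ext fun p => ?_
  simp [D, θop, M, Module.End.mul_apply, sub_mul]

theorem D_aeval (P : ℂ[X]) : D * aeval θop P = aeval θop (P.comp (X + 1)) * D := by
  induction P using Polynomial.induction_on' with
  | add p q hp hq => simp only [map_add, add_comp, mul_add, add_mul, hp, hq]
  | monomial n a =>
    have key : D * θop ^ n = (θop + 1) ^ n * D := by
      induction n with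
      | zero => simp
      | succ n ih => rw [pow_succ, ← mul_assoc, ih, mul_assoc, D_mul_theta, ← mul_assoc, ← pow_succ]
    simp only [← C_mul_X_pow_eq_monomial, map_mul, aeval_C, map_pow, aeval_X, mul_comp, C_comp,
      pow_comp, X_comp, map_add, map_one]
    rw [← mul_assoc, ← Algebra.commutes, mul_assoc, key, mul_assoc]

/-- normal form -/
theorem shift_aux (P0 P1 P2 P3 Q0 Q1 Q2 Q3 : ℂ[X]) (s : ℂ)
    (h0 : Q0 * (X + C s) = (X + C (s + 3)) * P0)
    (h1 : Q1 * (X + C (s + 1)) - Q0 = (X + C (s + 3)) * P1 - P0.comp (X + 1))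
    (h2 : Q2 * (X + C (s + 2)) - Q1 = (X + C (s + 3)) * P2 - P1.comp (X + 1))
    (h3 : Q3 * (X + C (s + 3)) - Q2 = (X + C (s + 3)) * P3 - P2.comp (X + 1))
    (h4 : Q3 = P3.comp (X + 1)) :
    (aeval θop Q0 + aeval θop Q1 * D + aeval θop Q2 * D ^ 2 + aeval θop Q3 * D ^ 3)
      * (M (X - 1) * D + s • 1)
    = (M (X - 1) * D + (s + 3) • 1) *
      (aeval θop P0 + aeval θop P1 * D + aeval θop P2 * D ^ 2 + aeval θop P3 * D ^ 3) := by
  have e : ∀ c : ℂ, θop - D + c • (1 : EndP) = aeval θop (X + C c) - D := by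
    intro c
    simp [Algebra.algebraMap_eq_smul_one]
    abel
  have c1 : ∀ c : ℂ, D * aeval θop (X + C c) = aeval θop (X + C (c + 1)) * D := by
    intro c
    rw [D_aeval]
    congr 2
    simp
    ring
  have c2 : ∀ c : ℂ, D ^ 2 * aeval θop (X + C c) = aeval θop (X + C (c + 2)) * D ^ 2 := by
    intro c
    rw [pow_two, mul_assoc, c1, ← mul_assoc, c1, mul_assoc, add_assoc, one_add_one_eq_two]
  have c3 : ∀ c : ℂ, D ^ 3 * aeval θop (X + C c) = aeval θop (X + C (c + 3)) * D ^ 3 := by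
    intro c
    rw [pow_succ, mul_assoc, c1, ← mul_assoc, c2, mul_assoc, ← pow_succ]
    congr 4
    ring
  rw [M_sub, e, e]
  have g0 := congrArg (aeval θop) h0
  have g1 := congrArg (aeval θop) h1
  have g2 := congrArg (aeval θop) h2
  have g3 := congrArg (aeval θop) h3
  have g4 := congrArg (aeval θop) h4
  simp only [map_sub, map_mul] at g0 g1 g2 g3 g4
  calc _ = aeval θop Q0 * aeval θop (X + C s)
        + (aeval θop Q1 * aeval θop (X + C (s + 1)) - aeval θop Q0) * D
        + (aeval θop Q2 * aeval θop (X + C (s + 2)) - aeval θop Q1) * D ^ 2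
        + (aeval θop Q3 * aeval θop (X + C (s + 3)) - aeval θop Q2) * D ^ 3
        - aeval θop Q3 * D ^ 4 := by
        simp only [add_mul, mul_sub, sub_mul, mul_assoc, c1, c2, c3]
        noncomm_ring
    _ = _ := by
        rw [g0, g1, g2, g3, g4]
        simp only [mul_add, sub_mul, mul_assoc]
        simp only [← mul_assoc D, D_aeval]
        noncomm_ring

def P0 (s e7 e8 e9 : ℂ) : ℂ[X] :=
  (X + C (s + 2)) * (X + C (s + 1)) * (X + C s) * ((X + C e7) * (X + C e8) * (X + C e9))
def P1 (s a b u : ℂ) : ℂ[X] :=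
  (X + C (s + 2)) * (X + C (s + 1)) * (C (-3) * X ^ 3 + C a * X ^ 2 + C b * X + C u)
def P2 (s a b c : ℂ) : ℂ[X] :=
  (X + C (s + 2)) * (C 3 * X ^ 3 + C a * X ^ 2 + C b * X + C c)
def P3 (e1 e2 e3 : ℂ) : ℂ[X] :=
  -((X + C (3 - e1)) * (X + C (3 - e2)) * (X + C (3 - e3)))

/-- Shift operator of `H₆` for the block shift `sh₁ : (e₁,e₂,e₃) → (e₁−1,e₂−1,e₃−1)`:
`H₆(sh₁(e), u − α₁) ∘ ((x−1)∂ + s) = ((x−1)∂ + s + 3) ∘ H₆(e,u)` where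
`α₁ = s₁₃ + s₂₃ + 1`. -/
theorem H6_shift_operator_sh1 (e1 e2 e3 e4 e5 e6 e7 e8 e9 u : ℂ) :
    H6op (e1 - 1) (e2 - 1) (e3 - 1) e4 e5 e6 e7 e8 e9
        (u - ((e7 + e8 + e9) + (e7*e8 + e7*e9 + e8*e9) + 1))
      * (M (X - 1) * D + (sC e1 e2 e3 e4 e5 e6 e7 e8 e9) • 1)
    = (M (X - 1) * D + (sC e1 e2 e3 e4 e5 e6 e7 e8 e9 + 3) • 1)
      * H6op e1 e2 e3 e4 e5 e6 e7 e8 e9 u := by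
  have H : ∀ e1 e2 e3 e4 e5 e6 e7 e8 e9 u : ℂ, H6op e1 e2 e3 e4 e5 e6 e7 e8 e9 u =
      aeval θop (P0 (sC e1 e2 e3 e4 e5 e6 e7 e8 e9) e7 e8 e9)
      + aeval θop (P1 (sC e1 e2 e3 e4 e5 e6 e7 e8 e9) (T12C e1 e2 e3 e4 e5 e6 e7 e8 e9)
          (T11C e1 e2 e3 e4 e5 e6 e7 e8 e9) u) * D
      + aeval θop (P2 (sC e1 e2 e3 e4 e5 e6 e7 e8 e9) (T22C e1 e2 e3 e4 e5 e6 e7 e8 e9)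
          (T21C e1 e2 e3 e4 e5 e6 e7 e8 e9) (T20C e1 e2 e3 e4 e5 e6 e7 e8 e9 u)) * D ^ 2
      + aeval θop (P3 e1 e2 e3) * D ^ 3 := by
    intros
    simp only [H6op, B0op, B1op, B2op, T3op, P0, P1, P2, P3, map_mul (aeval θop), map_add (aeval θop),
      map_neg (aeval (R := ℂ) θop), map_pow (aeval θop),
      aeval_X, aeval_C, Algebra.algebraMap_eq_smul_one, smul_mul_assoc, one_mul, mul_assoc]
  rw [H, H]
  have hs : sC (e1 - 1) (e2 - 1) (e3 - 1) e4 e5 e6 e7 e8 e9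
      = sC e1 e2 e3 e4 e5 e6 e7 e8 e9 + 1 := by
    simp only [sC]; ring
  rw [hs]
  generalize sC e1 e2 e3 e4 e5 e6 e7 e8 e9 = s
  apply shift_aux <;> apply Polynomial.funext <;> intro t <;>
    simp only [P0, P1, P2, P3, eval_mul, eval_add, eval_sub, eval_neg, eval_pow, eval_X, eval_C,
      eval_comp, eval_one]
  · ring
  · have k : (-3 * t ^ 3 + T12C (e1 - 1) (e2 - 1) (e3 - 1) e4 e5 e6 e7 e8 e9 * t ^ 2
        + T11C (e1 - 1) (e2 - 1) (e3 - 1) e4 e5 e6 e7 e8 e9 * t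
        + (u - ((e7 + e8 + e9) + (e7*e8 + e7*e9 + e8*e9) + 1)))
        - (t + e7) * (t + e8) * (t + e9)
        = (-3 * t ^ 3 + T12C e1 e2 e3 e4 e5 e6 e7 e8 e9 * t ^ 2
        + T11C e1 e2 e3 e4 e5 e6 e7 e8 e9 * t + u)
        - (t + 1 + e7) * (t + 1 + e8) * (t + 1 + e9) := by
      simp only [T12C, T11C]; ring
    linear_combination (t + s + 3) * (t + s + 2) * (t + s + 1) * k
  · have k : (3 * t ^ 3 + T22C (e1 - 1) (e2 - 1) (e3 - 1) e4 e5 e6 e7 e8 e9 * t ^ 2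
        + T21C (e1 - 1) (e2 - 1) (e3 - 1) e4 e5 e6 e7 e8 e9 * t
        + T20C (e1 - 1) (e2 - 1) (e3 - 1) e4 e5 e6 e7 e8 e9
          (u - ((e7 + e8 + e9) + (e7*e8 + e7*e9 + e8*e9) + 1)))
        - (-3 * t ^ 3 + T12C (e1 - 1) (e2 - 1) (e3 - 1) e4 e5 e6 e7 e8 e9 * t ^ 2
        + T11C (e1 - 1) (e2 - 1) (e3 - 1) e4 e5 e6 e7 e8 e9 * t
        + (u - ((e7 + e8 + e9) + (e7*e8 + e7*e9 + e8*e9) + 1)))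
        = (3 * t ^ 3 + T22C e1 e2 e3 e4 e5 e6 e7 e8 e9 * t ^ 2
        + T21C e1 e2 e3 e4 e5 e6 e7 e8 e9 * t + T20C e1 e2 e3 e4 e5 e6 e7 e8 e9 u)
        - (-3 * (t + 1) ^ 3 + T12C e1 e2 e3 e4 e5 e6 e7 e8 e9 * (t + 1) ^ 2
        + T11C e1 e2 e3 e4 e5 e6 e7 e8 e9 * (t + 1) + u) := by
      simp only [T12C, T11C, T22C, T21C, T20C]; ring
    linear_combination (t + s + 3) * (t + s + 2) * k
  · have k : -((t + (3 - (e1 - 1))) * (t + (3 - (e2 - 1))) * (t + (3 - (e3 - 1))))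
        - (3 * t ^ 3 + T22C (e1 - 1) (e2 - 1) (e3 - 1) e4 e5 e6 e7 e8 e9 * t ^ 2
        + T21C (e1 - 1) (e2 - 1) (e3 - 1) e4 e5 e6 e7 e8 e9 * t
        + T20C (e1 - 1) (e2 - 1) (e3 - 1) e4 e5 e6 e7 e8 e9
          (u - ((e7 + e8 + e9) + (e7*e8 + e7*e9 + e8*e9) + 1)))
        = -((t + (3 - e1)) * (t + (3 - e2)) * (t + (3 - e3)))
        - (3 * (t + 1) ^ 3 + T22C e1 e2 e3 e4 e5 e6 e7 e8 e9 * (t + 1) ^ 2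
        + T21C e1 e2 e3 e4 e5 e6 e7 e8 e9 * (t + 1) + T20C e1 e2 e3 e4 e5 e6 e7 e8 e9 u) := by
      simp only [T22C, T21C, T20C]; ring
    linear_combination (t + s + 3) * k
  · ring
end
end

section
/- Shift operators of H₅ for the descending block shifts: for all (e₁,…,e₈) ∈ ℂ⁸ and u ∈ ℂ, there exist u′, u″ ∈ ℂ such that H₅(e₁−1, e₂−1, e₃−1, e₄, e₅, e₆, e₇, e₈, u′) ∘ ((x−1)·∂ + 1 − r) = ((x−1)·∂ + 3 − r) ∘ H₅(e,u) and H₅(e₁, e₂, e₃, e₄−1, e₅−1, e₆−1, e₇, e₈, u″) ∘ (x·∂ + 1 − r) = (x·∂ + 3 − r) ∘ H₅(e,u) hold in End_ℂ(ℂ[x]), where r := (e₁+⋯+e₈−6)/3 is computed from e. -/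
open Polynomial

noncomputable section

/-- The operator `H₅(e₁,…,e₈,u)`, obtained from `H₆` at `e₉ = 0` by dividing by `∂`
from the right; here `r = (e₁+⋯+e₈−6)/3` and `B₅₁, B₅₂` are `B₁, B₂` at `e₉ = 0`. -/
def H5op (e1 e2 e3 e4 e5 e6 e7 e8 u : ℂ) : EndP :=
  let r := (e1 + e2 + e3 + e4 + e5 + e6 + e7 + e8 - 6) / 3;
  M X * ((θop + (1 - r) • 1) * (θop + (2 - r) • 1) * (θop + (3 - r) • 1)
      * (θop + (e7 + 1) • 1) * (θop + (e8 + 1) • 1))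
    + (θop + (1 - r) • 1) * (θop + (2 - r) • 1) * B1op e1 e2 e3 e4 e5 e6 e7 e8 0 u θop
    + (θop + (2 - r) • 1) * B2op e1 e2 e3 e4 e5 e6 e7 e8 0 u θop * D
    - (θop + (3 - e1) • 1) * (θop + (3 - e2) • 1) * (θop + (3 - e3) • 1) * D ^ 2

/-- Coefficient of `p` at an integer index (zero at negative indices). -/
def cz (p : Polynomial ℂ) (k : ℤ) : ℂ := if 0 ≤ k then p.coeff k.toNat else 0

theorem cz_ext {p q : Polynomial ℂ} (h : ∀ k, cz p k = cz q k) : p = q := by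
  ext n
  simpa [cz] using h n

theorem cz_add (p q : Polynomial ℂ) (k : ℤ) : cz (p + q) k = cz p k + cz q k := by
  unfold cz; split_ifs <;> simp

theorem cz_sub (p q : Polynomial ℂ) (k : ℤ) : cz (p - q) k = cz p k - cz q k := by
  unfold cz; split_ifs <;> simp

theorem cz_smul (a : ℂ) (p : Polynomial ℂ) (k : ℤ) : cz (a • p) k = a * cz p k := by
  unfold cz; split_ifs <;> simp

theorem cz_D (p : Polynomial ℂ) (k : ℤ) : cz (D p) k = (k + 1) * cz p (k + 1) := by
  unfold cz D
  split_ifs with h1 h2 h2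
  · lift k to ℕ using h1
    have : ((k : ℤ) + 1).toNat = k + 1 := by omega
    rw [this]
    simp [Polynomial.coeff_derivative, mul_comm]
  · omega
  · have : k = -1 := by omega
    subst this; simp
  · simp

theorem cz_X (p : Polynomial ℂ) (k : ℤ) : cz (M X p) k = cz p (k - 1) := by
  unfold cz M
  split_ifs with h1 h2 h2
  · lift k to ℕ using h1
    obtain ⟨m, rfl⟩ : ∃ m, k = m + 1 := ⟨k - 1, by omega⟩
    simp
  · have : k = 0 := by omega
    subst this; simp
  · omega
  · rfl

theorem cz_θ (p : Polynomial ℂ) (k : ℤ) : cz (θop p) k = k * cz p k := by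
  unfold θop
  rw [Module.End.mul_apply, cz_X, cz_D]
  simp

theorem M_X_sub_one : M (X - 1) = M X - 1 := by
  refine LinearMap.ext fun p => ?_
  simp [M, sub_mul]

/-- Scalar version of `B₁` at `e₉ = 0`. -/
def b1 (e1 e2 e3 e4 e5 e6 e7 e8 u t : ℂ) : ℂ :=
  -3 * t ^ 3 + T12C e1 e2 e3 e4 e5 e6 e7 e8 0 * t ^ 2 + T11C e1 e2 e3 e4 e5 e6 e7 e8 0 * t + u

/-- Scalar version of `B₂` at `e₉ = 0`. -/
def b2 (e1 e2 e3 e4 e5 e6 e7 e8 u t : ℂ) : ℂ :=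
  3 * t ^ 3 + T22C e1 e2 e3 e4 e5 e6 e7 e8 0 * t ^ 2 + T21C e1 e2 e3 e4 e5 e6 e7 e8 0 * t
    + T20C e1 e2 e3 e4 e5 e6 e7 e8 0 u

theorem cz_lin (a : ℂ) (p : Polynomial ℂ) (k : ℤ) :
    cz ((θop + a • 1) p) k = (k + a) * cz p k := by
  rw [LinearMap.add_apply, cz_add, cz_θ, LinearMap.smul_apply, cz_smul, Module.End.one_apply]
  ring

theorem cz_B1 (e1 e2 e3 e4 e5 e6 e7 e8 u : ℂ) (p : Polynomial ℂ) (k : ℤ) :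
    cz (B1op e1 e2 e3 e4 e5 e6 e7 e8 0 u θop p) k = b1 e1 e2 e3 e4 e5 e6 e7 e8 u k * cz p k := by
  unfold B1op b1
  simp only [pow_succ, pow_zero, one_mul, LinearMap.add_apply, cz_add, LinearMap.smul_apply,
    cz_smul, Module.End.mul_apply, cz_θ, Module.End.one_apply]
  ring

theorem cz_B2 (e1 e2 e3 e4 e5 e6 e7 e8 u : ℂ) (p : Polynomial ℂ) (k : ℤ) :
    cz (B2op e1 e2 e3 e4 e5 e6 e7 e8 0 u θop p) k = b2 e1 e2 e3 e4 e5 e6 e7 e8 u k * cz p k := by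
  unfold B2op b2
  simp only [pow_succ, pow_zero, one_mul, LinearMap.add_apply, cz_add, LinearMap.smul_apply,
    cz_smul, Module.End.mul_apply, cz_θ, Module.End.one_apply]
  ring

theorem cz_H5 (e1 e2 e3 e4 e5 e6 e7 e8 u r : ℂ)
    (hr : r = (e1 + e2 + e3 + e4 + e5 + e6 + e7 + e8 - 6) / 3) (p : Polynomial ℂ) (k : ℤ) :
    cz (H5op e1 e2 e3 e4 e5 e6 e7 e8 u p) k =
      (k - r) * (k + 1 - r) * (k + 2 - r) * (k + e7) * (k + e8) * cz p (k - 1)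
      + (k + 1 - r) * (k + 2 - r) * b1 e1 e2 e3 e4 e5 e6 e7 e8 u k * cz p k
      + (k + 2 - r) * b2 e1 e2 e3 e4 e5 e6 e7 e8 u k * (k + 1) * cz p (k + 1)
      - (k + 3 - e1) * (k + 3 - e2) * (k + 3 - e3) * (k + 1) * (k + 2) * cz p (k + 2) := by
  have h2 : k + 1 + 1 = k + 2 := by ring
  unfold H5op
  simp only [← hr]
  simp only [pow_two, LinearMap.add_apply, LinearMap.sub_apply, cz_add, cz_sub,
    Module.End.mul_apply, cz_X, LinearMap.smul_apply, cz_smul, cz_θ, Module.End.one_apply, cz_B1, cz_B2, cz_D, h2]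
  push_cast
  ring

/-- Shift operators of `H₅` for the descending block shifts: for suitable accessory
parameters `u′, u″`,
`H₅(e₁−1,e₂−1,e₃−1,e₄,…,e₈,u′) ∘ ((x−1)∂ + 1 − r) = ((x−1)∂ + 3 − r) ∘ H₅(e,u)` and
`H₅(e₁,e₂,e₃,e₄−1,e₅−1,e₆−1,e₇,e₈,u″) ∘ (x∂ + 1 − r) = (x∂ + 3 − r) ∘ H₅(e,u)`. -/
theorem H5_shift_operators_descending (e1 e2 e3 e4 e5 e6 e7 e8 u r : ℂ)
    (hr : r = (e1 + e2 + e3 + e4 + e5 + e6 + e7 + e8 - 6) / 3) :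
    (∃ u' : ℂ,
      H5op (e1 - 1) (e2 - 1) (e3 - 1) e4 e5 e6 e7 e8 u'
          * (M (X - 1) * D + (1 - r) • 1)
        = (M (X - 1) * D + (3 - r) • 1) * H5op e1 e2 e3 e4 e5 e6 e7 e8 u) ∧
    (∃ u'' : ℂ,
      H5op e1 e2 e3 (e4 - 1) (e5 - 1) (e6 - 1) e7 e8 u''
          * (M X * D + (1 - r) • 1)
        = (M X * D + (3 - r) • 1) * H5op e1 e2 e3 e4 e5 e6 e7 e8 u) := by
  constructor
  · refine ⟨u - (e7 + 1) * (e8 + 1), ?_⟩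
    have hr' : r - 1 = (e1 - 1 + (e2 - 1) + (e3 - 1) + e4 + e5 + e6 + e7 + e8 - 6) / 3 := by
      rw [hr]; ring
    have hL : ∀ (a : ℂ) (p : Polynomial ℂ) (k : ℤ), cz ((M (X - 1) * D + a • 1) p) k
        = (k + a) * cz p k - (k + 1) * cz p (k + 1) := by
      intro a p k
      have : M (X - 1) * D + a • 1 = (θop + a • 1) - D := by
        rw [M_X_sub_one, sub_mul, one_mul]; unfold θop; abel
      rw [this, LinearMap.sub_apply, cz_sub, cz_lin, cz_D]
    refine LinearMap.ext fun p => ?_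
    refine cz_ext fun k => ?_
    rw [Module.End.mul_apply, Module.End.mul_apply, cz_H5 _ _ _ _ _ _ _ _ _ _ hr', hL]
    simp only [hL, cz_H5 _ _ _ _ _ _ _ _ _ _ hr]
    have a1 : k - 1 + 1 = k := by ring
    have a2 : k + 1 + 1 = k + 2 := by ring
    have a3 : k + 1 - 1 = k := by ring
    have a4 : k + 2 + 1 = k + 3 := by ring
    have a5 : k + 1 + 2 = k + 3 := by ring
    rw [a1, a2, a3, a4, a5]
    push_cast
    generalize (k : ℂ) = t
    have I0 : b1 (e1 - 1) (e2 - 1) (e3 - 1) e4 e5 e6 e7 e8 (u - (e7 + 1) * (e8 + 1)) t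
        = b1 e1 e2 e3 e4 e5 e6 e7 e8 u t - (t + 1) * (t + 1 + e7) * (t + 1 + e8)
          + t * (t + e7) * (t + e8) := by
      unfold b1 T12C T11C; ring
    have I1 : b2 (e1 - 1) (e2 - 1) (e3 - 1) e4 e5 e6 e7 e8 (u - (e7 + 1) * (e8 + 1)) t
        - b1 (e1 - 1) (e2 - 1) (e3 - 1) e4 e5 e6 e7 e8 (u - (e7 + 1) * (e8 + 1)) t
        = b2 e1 e2 e3 e4 e5 e6 e7 e8 u t - b1 e1 e2 e3 e4 e5 e6 e7 e8 u (t + 1) := by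
      unfold b1 b2 T12C T11C T22C T21C T20C; ring
    have I2 : -b2 (e1 - 1) (e2 - 1) (e3 - 1) e4 e5 e6 e7 e8 (u - (e7 + 1) * (e8 + 1)) t
        - (t + 4 - e1) * (t + 4 - e2) * (t + 4 - e3)
        = -((t + 3 - e1) * (t + 3 - e2) * (t + 3 - e3)) - b2 e1 e2 e3 e4 e5 e6 e7 e8 u (t + 1) := by
      unfold b2 T22C T21C T20C; ring
    linear_combination (t + 1 - r) * (t + 2 - r) * (t + 3 - r) * cz p k * I0
      + (t + 1) * (t + 2 - r) * (t + 3 - r) * cz p (k + 1) * I1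
      + (t + 1) * (t + 2) * (t + 3 - r) * cz p (k + 2) * I2
  · refine ⟨u, ?_⟩
    have hr' : r - 1 = (e1 + e2 + e3 + (e4 - 1) + (e5 - 1) + (e6 - 1) + e7 + e8 - 6) / 3 := by
      rw [hr]; ring
    have hL : ∀ (a : ℂ) (p : Polynomial ℂ) (k : ℤ), cz ((M X * D + a • 1) p) k
        = (k + a) * cz p k := cz_lin
    refine LinearMap.ext fun p => ?_
    refine cz_ext fun k => ?_
    rw [Module.End.mul_apply, Module.End.mul_apply, cz_H5 _ _ _ _ _ _ _ _ _ _ hr', hL]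
    simp only [hL, cz_H5 _ _ _ _ _ _ _ _ _ _ hr]
    push_cast
    generalize (k : ℂ) = t
    have I0 : b1 e1 e2 e3 (e4 - 1) (e5 - 1) (e6 - 1) e7 e8 u t
        = b1 e1 e2 e3 e4 e5 e6 e7 e8 u t := by
      unfold b1 T12C T11C; ring
    have I1 : b2 e1 e2 e3 (e4 - 1) (e5 - 1) (e6 - 1) e7 e8 u t
        = b2 e1 e2 e3 e4 e5 e6 e7 e8 u t := by
      unfold b2 T22C T21C T20C; ring
    rw [I0, I1]
    ring
end
end
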